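/- arXiv:1311.5956 — 6 statements merged into one kernel-verified Lean document; each statement's English description precedes it below -/
import Mathlib

section
/- Let a directed graph on vertex set Fin n be given by an irreflexive relation E (E j i means there is a directed edge from j to i), and suppose the graph has a spanning tree, i.e., there exists a root: a vertex r such that every vertex lies in the reflexive-transitive closure of E starting from r. Let S₁ be the set of all roots. Then the subgraph induced by S₁ is strongly connected: for any two roots r, r' ∈ S₁, the vertex r' is reachable from r by the reflexive-transitive closure of the relation E restricted to S₁ (i.e., there is a directed path from r to r' all of whose vertices are roots). -/
open Relation

section

variable {α : Type*} {E : α → α → Prop} {a b r r' : α}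

theorem reflTransGen_restrict_of_predecessor_closed {P : α → Prop}
    (hP : ∀ ⦃a b⦄, E a b → P b → P a) (hab : ReflTransGen E a b) (hb : P b) :
    ReflTransGen (fun x y => E x y ∧ P x ∧ P y) a b := by
  induction hab with
  | refl => exact .refl
  | tail _ hcd ih =>
    have hc := hP hcd hb
    exact (ih hc).tail ⟨hcd, hc, hb⟩

/-- A root of the directed graph with edge relation `E`: a vertex from which every vertex is
reachable. A spanning tree is encoded by the existence of such a vertex. -/
def IsRoot (E : α → α → Prop) (r : α) : Prop :=
  ∀ v, ReflTransGen E r v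

theorem IsRoot.of_edge (hab : E a b) (hb : IsRoot E b) : IsRoot E a :=
  fun v => (hb v).head hab

theorem roots_induced_subgraph_strongly_connected_general
    (hrr' : ReflTransGen E r r') (hr' : IsRoot E r') :
    ReflTransGen (fun a b => E a b ∧ IsRoot E a ∧ IsRoot E b) r r' :=
  reflTransGen_restrict_of_predecessor_closed (fun _ _ => IsRoot.of_edge) hrr' hr'

end

/-- If a directed graph on `Fin n` (given by an irreflexive relation `E`)
has a spanning tree, then the subgraph induced by the set `S₁` of roots is strongly
connected: any root `r'` is reachable from any root `r` by a directed path all of whose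
vertices are roots. -/
theorem roots_induced_subgraph_strongly_connected
    (n : ℕ) (E : Fin n → Fin n → Prop) (hirr : ∀ i, ¬ E i i)
    (hspan : ∃ r : Fin n, ∀ v : Fin n, Relation.ReflTransGen E r v)
    (r r' : Fin n)
    (hr : ∀ v : Fin n, Relation.ReflTransGen E r v)
    (hr' : ∀ v : Fin n, Relation.ReflTransGen E r' v) :
    Relation.ReflTransGen
      (fun a b => E a b ∧ (∀ v, Relation.ReflTransGen E a v) ∧
        (∀ v, Relation.ReflTransGen E b v)) r r' :=
  roots_induced_subgraph_strongly_connected_general (hr r') hr'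
end

section
/- Let L be a graph Laplacian such that G(L) has a spanning tree. If v : Fin n → ℝ satisfies ∑ j, L i j * v j = 0 for every i, then v is constant: v i = v j for all i, j. (Equivalently, the kernel of L is spanned by the all-ones vector.) -/
/-!
The proof is a maximum principle. Since the rows of `L` sum to zero,
`(L v) i = ∑ j, L i j * (v j - v i)`. If `v` is maximal at `i`, every summand is nonnegative, so
`(L v) i ≤ 0` forces `v j = v i` for every edge `j → i`. The maximum therefore propagates backwards
along directed paths and is attained at every root. Applying this to both `v` and `-v` shows that a
kernel vector has its maximum and its minimum at the root.
-/

open Matrix Relation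

variable {ι R : Type*}

/-- Graph Laplacians: the off-diagonal entries are nonpositive and every row sums to zero.
No symmetry is required, so these are the Laplacians of weighted directed graphs. -/
structure IsGraphLaplacian [Fintype ι] [AddCommMonoid R] [LE R] (L : Matrix ι ι R) : Prop where
  off_diag_nonpos : ∀ i j, i ≠ j → L i j ≤ 0
  row_sum_eq_zero : ∀ i, ∑ j, L i j = 0

/-- The edge relation of the directed graph `G(L)`. The edge `a → b` is recorded by the entry in
row `b` and column `a`, so that row `b` of `L` lists the edges entering `b`. -/
def LaplacianEdge [Zero R] [LT R] (L : Matrix ι ι R) (a b : ι) : Prop :=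
  a ≠ b ∧ L b a < 0

namespace IsGraphLaplacian

variable [Fintype ι] [Ring R] {L : Matrix ι ι R} {v : ι → R}

theorem mulVec_apply_eq_sum_mul_sub [LE R] (hL : IsGraphLaplacian L) (v : ι → R) (i : ι) :
    (L *ᵥ v) i = ∑ j, L i j * (v j - v i) := by
  simp only [mul_sub, Finset.sum_sub_distrib, ← Finset.sum_mul, hL.row_sum_eq_zero, zero_mul,
    sub_zero, mulVec, dotProduct]

section PartialOrder

variable [PartialOrder R] [IsStrictOrderedRing R]

theorem eq_of_edge_of_forall_le (hL : IsGraphLaplacian L) {i j : ι} (hv : (L *ᵥ v) i ≤ 0)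
    (hmax : ∀ k, v k ≤ v i) (hji : LaplacianEdge L j i) : v j = v i := by
  have term_nonneg : ∀ k ∈ Finset.univ, 0 ≤ L i k * (v k - v i) := by
    intro k _
    obtain rfl | hik := eq_or_ne i k
    · simp
    · exact mul_nonneg_of_nonpos_of_nonpos (hL.off_diag_nonpos i k hik)
        (sub_nonpos.2 (hmax k))
  have term_nonpos : L i j * (v j - v i) ≤ 0 :=
    calc L i j * (v j - v i)
      _ ≤ ∑ k, L i k * (v k - v i) := Finset.single_le_sum term_nonneg (Finset.mem_univ j)
      _ = (L *ᵥ v) i := (hL.mulVec_apply_eq_sum_mul_sub v i).symm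
      _ ≤ 0 := hv
  by_contra hne
  have hlt : v j < v i := (hmax j).lt_of_ne hne
  exact (mul_pos_of_neg_of_neg hji.2 (sub_neg.2 hlt)).not_ge term_nonpos

theorem eq_of_reachable_of_forall_le (hL : IsGraphLaplacian L) (hv : L *ᵥ v ≤ 0) {r m : ι}
    (hmax : ∀ k, v k ≤ v m) (hrm : ReflTransGen (LaplacianEdge L) r m) : v r = v m := by
  induction hrm using ReflTransGen.head_induction_on with
  | refl => rfl
  | head hac _ hcm =>
    exact (hL.eq_of_edge_of_forall_le (hv _) (fun k => (hmax k).trans_eq hcm.symm) hac).trans hcm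

end PartialOrder

theorem le_apply_root [LinearOrder R] [IsStrictOrderedRing R] (hL : IsGraphLaplacian L)
    (hv : L *ᵥ v ≤ 0) {r : ι} (hr : ∀ w, ReflTransGen (LaplacianEdge L) r w) (w : ι) :
    v w ≤ v r := by
  have : Nonempty ι := ⟨r⟩
  obtain ⟨m, hm⟩ := Finite.exists_max v
  exact (hm w).trans_eq (hL.eq_of_reachable_of_forall_le hv hm (hr m)).symm

end IsGraphLaplacian

theorem kernel_constant_of_spanning_tree_general [Fintype ι] [Ring R] [LinearOrder R]
    [IsStrictOrderedRing R] {L : Matrix ι ι R} (hL : IsGraphLaplacian L)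
    (hroot : ∃ r, ∀ w, ReflTransGen (LaplacianEdge L) r w) {v : ι → R} (hv : L *ᵥ v = 0) :
    ∀ i j, v i = v j := by
  obtain ⟨r, hr⟩ := hroot
  have hneg : L *ᵥ (-v) = 0 := by rw [mulVec_neg, hv, neg_zero]
  have eq_root (w : ι) : v w = v r :=
    le_antisymm (hL.le_apply_root hv.le hr w) (neg_le_neg_iff.1 (hL.le_apply_root hneg.le hr w))
  exact fun i j => (eq_root i).trans (eq_root j).symm

/-- If `L` is a graph Laplacian whose graph `G(L)` (edge from `a` to `b` iff
`a ≠ b` and `L b a < 0`) has a spanning tree, then every vector `v` in the kernel of `L`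
is constant. -/
theorem kernel_constant_of_spanning_tree
    (n : ℕ) (L : Matrix (Fin n) (Fin n) ℝ)
    (hL1 : ∀ i j, i ≠ j → L i j ≤ 0) (hL2 : ∀ i, ∑ j, L i j = 0)
    (hroot : ∃ r : Fin n, ∀ w : Fin n,
      Relation.ReflTransGen (fun a b => a ≠ b ∧ L b a < 0) r w)
    (v : Fin n → ℝ) (hv : ∀ i, ∑ j, L i j * v j = 0) :
    ∀ i j, v i = v j :=
  kernel_constant_of_spanning_tree_general ⟨hL1, hL2⟩ hroot (funext hv)
end

section
/- Let L be a graph Laplacian, g : ℝ → ℝ strictly increasing, and let (x, γ) be a Filippov solution of the protocol ẋ_i = -∑_j L i j g(x_j) with initial value x0. Then the function t ↦ max_i x t i is nonincreasing on [0, ∞) and the function t ↦ min_i x t i is nondecreasing on [0, ∞); in particular every Filippov solution remains in the box [min_i x0 i, max_i x0 i]^n for all t ≥ 0. -/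
open MeasureTheory Function

/-- Maximum entry of a vector on a nonempty `Fin n`. -/
noncomputable def vecMax {n : ℕ} (hn : 0 < n) (v : Fin n → ℝ) : ℝ :=
  Finset.univ.sup' ⟨⟨0, hn⟩, Finset.mem_univ _⟩ v

/-- Minimum entry of a vector on a nonempty `Fin n`. -/
noncomputable def vecMin {n : ℕ} (hn : 0 < n) (v : Fin n → ℝ) : ℝ :=
  Finset.univ.inf' ⟨⟨0, hn⟩, Finset.mem_univ _⟩ v

/-!
Each coordinate of a solution is absolutely continuous, hence so is the maximal coordinate, and it
suffices to show that its derivative is almost everywhere nonpositive. Where everything is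
differentiable, the derivative of the maximum is that of any coordinate attaining it. Among those
coordinates choose an `i` with `γ i` largest. As `γ` is ordered like `x`, this `γ i` is the largest
entry of `γ` altogether, and a graph Laplacian is nonnegative at a maximal entry, so `ẋ_i ≤ 0`. The
minimum is treated by passing to `(-x, -γ)`.
-/

open Set Filter Topology

open scoped Matrix

section AbsolutelyContinuous

variable {a b : ℝ}

theorem absolutelyContinuousOnInterval_congr {X : Type*} [PseudoMetricSpace X] {f g : ℝ → X}
    (hf : AbsolutelyContinuousOnInterval f a b) (hfg : EqOn f g (uIcc a b)) :
    AbsolutelyContinuousOnInterval g a b := by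
  refine Tendsto.congr' (eventually_inf_principal.2 (Eventually.of_forall ?_)) hf
  intro E hE
  refine Finset.sum_congr rfl fun k hk => ?_
  rw [hfg (hE.1 k hk).1, hfg (hE.1 k hk).2]

theorem absolutelyContinuousOnInterval_sup {F : Type*} [NormedAddCommGroup F] [Lattice F]
    [HasSolidNorm F] [IsOrderedAddMonoid F] {f g : ℝ → F}
    (hf : AbsolutelyContinuousOnInterval f a b) (hg : AbsolutelyContinuousOnInterval g a b) :
    AbsolutelyContinuousOnInterval (f ⊔ g) a b := by
  refine squeeze_zero (fun E => Finset.sum_nonneg fun _ _ => dist_nonneg) (fun E => ?_)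
    (by simpa only [add_zero] using Tendsto.add hf hg)
  rw [← Finset.sum_add_distrib]
  refine Finset.sum_le_sum fun k _ => ?_
  simpa only [dist_eq_norm] using! norm_sup_sub_sup_le_add_norm _ _ _ _

theorem absolutelyContinuousOnInterval_finset_sup' {ι F : Type*} [NormedAddCommGroup F] [Lattice F]
    [HasSolidNorm F] [IsOrderedAddMonoid F] {s : Finset ι} (hs : s.Nonempty) {x : ℝ → ι → F}
    (hx : ∀ i ∈ s, AbsolutelyContinuousOnInterval (fun t => x t i) a b) :
    AbsolutelyContinuousOnInterval (fun t => s.sup' hs (x t)) a b := by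
  have h := Finset.sup'_induction hs (fun i t => x t i)
    (p := fun f => AbsolutelyContinuousOnInterval f a b)
    (fun _ hf _ hg => absolutelyContinuousOnInterval_sup hf hg) hx
  exact funext (Finset.sup'_apply hs fun i t => x t i) ▸ h

theorem absolutelyContinuousOnInterval_of_eqOn_add_intervalIntegral {f φ : ℝ → ℝ} {c : ℝ}
    (hφ : IntervalIntegrable φ volume a b)
    (hf : EqOn f (fun t => c + ∫ s in a..t, φ s) (uIcc a b)) :
    AbsolutelyContinuousOnInterval f a b := by
  have hconst : AbsolutelyContinuousOnInterval (fun _ : ℝ => c) a b :=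
    (LipschitzWith.const c).lipschitzOnWith.absolutelyContinuousOnInterval
  have hint := hφ.absolutelyContinuousOnInterval_intervalIntegral left_mem_uIcc
  exact absolutelyContinuousOnInterval_congr (hconst.add hint) hf.symm

theorem ae_hasDerivAt_of_eqOn_add_intervalIntegral {E : Type*} [NormedAddCommGroup E]
    [NormedSpace ℝ E] [CompleteSpace E] {f φ : ℝ → E} {c : E}
    (hφ : IntervalIntegrable φ volume a b)
    (hf : EqOn f (fun t => c + ∫ s in a..t, φ s) (Icc a b)) :
    ∀ᵐ t, t ∈ Ioo a b → HasDerivAt f (φ t) t := by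
  filter_upwards [hφ.ae_hasDerivAt_integral] with t ht htab
  have hint := ht (Icc_subset_uIcc (Ioo_subset_Icc_self htab)) a left_mem_uIcc
  exact (hint.const_add c).congr_of_eventuallyEq
    (hf.eventuallyEq_of_mem (Icc_mem_nhds htab.1 htab.2))

theorem antitoneOn_of_absolutelyContinuousOnInterval_of_ae_deriv_nonpos {f : ℝ → ℝ}
    (hf : AbsolutelyContinuousOnInterval f a b)
    (hf' : ∀ᵐ t, t ∈ Ioo a b → deriv f t ≤ 0) : AntitoneOn f (Icc a b) := by
  intro s hs t ht hst
  have hac : AbsolutelyContinuousOnInterval f s t :=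
    hf.mono (uIcc_subset_uIcc (Icc_subset_uIcc hs) (Icc_subset_uIcc ht))
  have hnonpos : ∫ r in s..t, deriv f r ≤ 0 := by
    rw [intervalIntegral.integral_of_le hst, integral_Ioc_eq_integral_Ioo]
    refine integral_nonpos_of_ae ((ae_restrict_iff' measurableSet_Ioo).2 ?_)
    filter_upwards [hf'] with r hr hrst
    exact hr (Ioo_subset_Ioo hs.1 ht.2 hrst)
  rwa [hac.integral_deriv_eq_sub, sub_nonpos] at hnonpos

end AbsolutelyContinuous

section Maximum

theorem hasDerivAt_eq_of_eventually_le_of_eq {f g : ℝ → ℝ} {f' g' t : ℝ}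
    (hf : HasDerivAt f f' t) (hg : HasDerivAt g g' t) (hle : ∀ᶠ s in 𝓝 t, f s ≤ g s)
    (heq : f t = g t) : f' = g' := by
  have hmin : IsLocalMin (g - f) t := by
    filter_upwards [hle] with s hs
    simpa only [Pi.sub_apply, heq, sub_self, sub_nonneg] using hs
  exact (sub_eq_zero.1 (hmin.hasDerivAt_eq_zero (hg.sub hf))).symm

theorem antitoneOn_finset_sup'_of_ae_exists_hasDerivAt_nonpos {ι : Type*} {s : Finset ι}
    (hs : s.Nonempty) {x : ℝ → ι → ℝ} {a b : ℝ}
    (hx : ∀ i ∈ s, AbsolutelyContinuousOnInterval (fun t => x t i) a b)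
    (hx' : ∀ᵐ t, t ∈ Ioo a b →
      ∃ i ∈ s, (∀ j ∈ s, x t j ≤ x t i) ∧ ∃ v ≤ 0, HasDerivAt (fun r => x r i) v t) :
    AntitoneOn (fun t => s.sup' hs (x t)) (Icc a b) := by
  have hac := absolutelyContinuousOnInterval_finset_sup' hs hx
  refine antitoneOn_of_absolutelyContinuousOnInterval_of_ae_deriv_nonpos hac ?_
  filter_upwards [hac.ae_differentiableAt, hx'] with t hdiff hderiv ht
  obtain ⟨i, his, hmax, v, hv, hxi⟩ := hderiv ht
  have hsup := (hdiff (Icc_subset_uIcc (Ioo_subset_Icc_self ht))).hasDerivAt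
  have hle : ∀ᶠ r in 𝓝 t, x r i ≤ s.sup' hs (x r) :=
    Eventually.of_forall fun r => Finset.le_sup' (x r) his
  have heq : x t i = s.sup' hs (x t) :=
    le_antisymm (Finset.le_sup' (x t) his) (Finset.sup'_le hs (x t) hmax)
  exact (hasDerivAt_eq_of_eventually_le_of_eq hxi hsup hle heq).symm.trans_le hv

theorem exists_forall_le_and_forall_le_of_monovary {ι α β : Type*} [Finite ι] [Nonempty ι]
    [LinearOrder α] [LinearOrder β] {f : ι → α} {g : ι → β} (h : Monovary f g) :
    ∃ i, (∀ j, g j ≤ g i) ∧ ∀ j, f j ≤ f i := by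
  obtain ⟨i, hi⟩ := Finite.exists_max fun i => toLex (g i, f i)
  have hlex : ∀ j, g j < g i ∨ g j = g i ∧ f j ≤ f i := fun j => Prod.Lex.toLex_le_toLex.1 (hi j)
  exact ⟨i, fun j => (hlex j).elim le_of_lt fun hj => hj.1.le,
    fun j => (hlex j).elim (fun hj => h hj) And.right⟩

theorem neg_finset_inf' {ι α : Type*} [AddCommGroup α] [Lattice α] [IsOrderedAddMonoid α]
    {s : Finset ι} (hs : s.Nonempty) (f : ι → α) : -s.inf' hs f = s.sup' hs (-f) :=
  map_finset_inf' (OrderIso.neg α) hs f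

end Maximum

/-- A graph Laplacian: a square matrix with nonpositive off-diagonal entries and zero row sums.
Symmetry is not required, so directed weighted graphs are included. -/
structure IsGraphLaplacian_s5 {ι R : Type*} [Fintype ι] [AddCommMonoid R] [LE R]
    (L : Matrix ι ι R) : Prop where
  apply_nonpos : ∀ i j, i ≠ j → L i j ≤ 0
  row_sum_eq_zero : ∀ i, ∑ j, L i j = 0

theorem IsGraphLaplacian_s5.mulVec_apply_nonneg {ι R : Type*} [Fintype ι] [Ring R] [PartialOrder R]
    [IsOrderedRing R] {L : Matrix ι ι R} (hL : IsGraphLaplacian_s5 L) {v : ι → R} {i : ι}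
    (hi : ∀ j, v j ≤ v i) : 0 ≤ (L *ᵥ v) i := by
  have hshift : (L *ᵥ v) i = ∑ j, L i j * (v j - v i) := by
    simp only [Matrix.mulVec, dotProduct, mul_sub, Finset.sum_sub_distrib, ← Finset.sum_mul,
      hL.row_sum_eq_zero, zero_mul, sub_zero]
  rw [hshift]
  refine Finset.sum_nonneg fun j _ => ?_
  rcases eq_or_ne i j with rfl | hij
  · rw [sub_self, mul_zero]
  · exact mul_nonneg_of_nonpos_of_nonpos (hL.apply_nonpos i j hij) (sub_nonpos.2 (hi j))

theorem intervalIntegrable_mulVec_apply {ι κ : Type*} [Fintype ι] {μ : Measure ℝ}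
    (L : Matrix κ ι ℝ) {γ : ℝ → ι → ℝ} {a b : ℝ} (hγ : IntervalIntegrable γ μ a b) (k : κ) :
    IntervalIntegrable (fun t => (L *ᵥ γ t) k) μ a b := by
  have hγj : ∀ j, IntervalIntegrable (fun t => γ t j) μ a b :=
    fun j => ⟨hγ.1.eval j, hγ.2.eval j⟩
  simpa only [Finset.sum_fn] using!
    IntervalIntegrable.sum Finset.univ fun j _ => (hγj j).const_mul (L k j)

theorem monovary_of_forall_mem_Icc_leftLim_rightLim {ι α β : Type*} [LinearOrder α]
    [ConditionallyCompleteLinearOrder β] [TopologicalSpace β] [OrderTopology β]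
    {g : α → β} (hg : Monotone g) {x : ι → α} {γ : ι → β}
    (hγ : ∀ i, γ i ∈ Icc (leftLim g (x i)) (rightLim g (x i))) : Monovary γ x :=
  fun i j hij => (hγ i).2.trans ((hg.rightLim_le_leftLim hij).trans (hγ j).1)

/-- An integral solution `x`, on `[0, ∞)` and with initial value `x0`, of `ẋ = -L γ`, where the
input `γ` is almost everywhere ordered like `x`. Filippov solutions of `ẋ_i = -∑_j L i j g(x_j)` are
replaced by this notion because it does not mention `g` and is visibly invariant under
`(x, γ) ↦ (-x, -γ)`, which exchanges maxima and minima. -/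
structure IsMonovarySolution {ι : Type*} [Fintype ι] (L : Matrix ι ι ℝ) (x0 : ι → ℝ)
    (x γ : ℝ → ι → ℝ) : Prop where
  intervalIntegrable : ∀ t, 0 ≤ t → IntervalIntegrable γ volume 0 t
  ae_monovary : ∀ᵐ t, 0 ≤ t → Monovary (γ t) (x t)
  eq_sub_integral : ∀ t, 0 ≤ t → ∀ i, x t i = x0 i - ∫ s in (0 : ℝ)..t, (L *ᵥ γ s) i

namespace IsMonovarySolution

variable {ι : Type*} [Fintype ι] {L : Matrix ι ι ℝ} {x0 : ι → ℝ} {x γ : ℝ → ι → ℝ}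

theorem apply_zero (h : IsMonovarySolution L x0 x γ) : x 0 = x0 := by
  funext i
  rw [h.eq_sub_integral 0 le_rfl i, intervalIntegral.integral_same, sub_zero]

protected theorem neg (h : IsMonovarySolution L x0 x γ) : IsMonovarySolution L (-x0) (-x) (-γ) where
  intervalIntegrable t ht := (h.intervalIntegrable t ht).neg
  ae_monovary := by
    filter_upwards [h.ae_monovary] with t hmono ht i j hij
    exact neg_le_neg (hmono ht (neg_lt_neg_iff.1 hij))
  eq_sub_integral t ht i := by
    simp only [Pi.neg_apply, Matrix.mulVec_neg, intervalIntegral.integral_neg,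
      h.eq_sub_integral t ht i]
    ring

theorem eqOn_add_integral (h : IsMonovarySolution L x0 x γ) (i : ι) :
    EqOn (fun t => x t i) (fun t => x0 i + ∫ s in (0 : ℝ)..t, -(L *ᵥ γ s) i) (Ici 0) := by
  intro t ht
  simp only [h.eq_sub_integral t ht i, intervalIntegral.integral_neg, sub_eq_add_neg]

theorem absolutelyContinuousOnInterval (h : IsMonovarySolution L x0 x γ) {T : ℝ} (hT : 0 ≤ T)
    (i : ι) : AbsolutelyContinuousOnInterval (fun t => x t i) 0 T := by
  refine absolutelyContinuousOnInterval_of_eqOn_add_intervalIntegral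
    (intervalIntegrable_mulVec_apply L (h.intervalIntegrable T hT) i).neg
    ((h.eqOn_add_integral i).mono ?_)
  rw [uIcc_of_le hT]
  exact Icc_subset_Ici_self

theorem ae_hasDerivAt (h : IsMonovarySolution L x0 x γ) {T : ℝ} (hT : 0 ≤ T) (i : ι) :
    ∀ᵐ t, t ∈ Ioo 0 T → HasDerivAt (fun r => x r i) (-(L *ᵥ γ t) i) t :=
  ae_hasDerivAt_of_eqOn_add_intervalIntegral
    (intervalIntegrable_mulVec_apply L (h.intervalIntegrable T hT) i).neg
    ((h.eqOn_add_integral i).mono Icc_subset_Ici_self)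

variable [Nonempty ι]

theorem antitoneOn_sup' (h : IsMonovarySolution L x0 x γ) (hL : IsGraphLaplacian_s5 L) :
    AntitoneOn (fun t => Finset.univ.sup' Finset.univ_nonempty (x t)) (Ici 0) := by
  intro s hs T hT hsT
  refine antitoneOn_finset_sup'_of_ae_exists_hasDerivAt_nonpos Finset.univ_nonempty
    (fun i _ => h.absolutelyContinuousOnInterval hT i) ?_ ⟨hs, hsT⟩ (right_mem_Icc.2 hT) hsT
  filter_upwards [ae_all_iff.2 (h.ae_hasDerivAt hT), h.ae_monovary] with t hderiv hmono ht
  obtain ⟨i, hxi, hγi⟩ := exists_forall_le_and_forall_le_of_monovary (hmono ht.1.le)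
  exact ⟨i, Finset.mem_univ i, fun j _ => hxi j, -(L *ᵥ γ t) i,
    neg_nonpos.2 (hL.mulVec_apply_nonneg hγi), hderiv i ht⟩

theorem monotoneOn_inf' (h : IsMonovarySolution L x0 x γ) (hL : IsGraphLaplacian_s5 L) :
    MonotoneOn (fun t => Finset.univ.inf' Finset.univ_nonempty (x t)) (Ici 0) := by
  intro s hs t ht hst
  refine neg_le_neg_iff.1 ?_
  rw [neg_finset_inf', neg_finset_inf']
  exact h.neg.antitoneOn_sup' hL hs ht hst

end IsMonovarySolution

theorem filippov_solution_shrinking_general {ι : Type*} [Fintype ι] [Nonempty ι]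
    {L : Matrix ι ι ℝ} (hL : IsGraphLaplacian_s5 L) {x0 : ι → ℝ} {x γ : ℝ → ι → ℝ}
    (h : IsMonovarySolution L x0 x γ) :
    AntitoneOn (fun t => Finset.univ.sup' Finset.univ_nonempty (x t)) (Ici 0) ∧
    MonotoneOn (fun t => Finset.univ.inf' Finset.univ_nonempty (x t)) (Ici 0) ∧
    ∀ t, 0 ≤ t → ∀ i, x t i ∈ Icc (Finset.univ.inf' Finset.univ_nonempty x0)
      (Finset.univ.sup' Finset.univ_nonempty x0) := by
  have hmax := h.antitoneOn_sup' hL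
  have hmin := h.monotoneOn_inf' hL
  refine ⟨hmax, hmin, fun t ht i => ?_⟩
  rw [← h.apply_zero]
  exact ⟨(hmin self_mem_Ici ht ht).trans (Finset.inf'_le (x t) (Finset.mem_univ i)),
    (Finset.le_sup' (x t) (Finset.mem_univ i)).trans (hmax self_mem_Ici ht ht)⟩

/-- For any Filippov solution `(x, γ)` of `ẋ_i = -∑_j L i j g(x_j)` with
initial value `x0`, the map `t ↦ max_i x t i` is nonincreasing on `[0, ∞)` and
`t ↦ min_i x t i` is nondecreasing on `[0, ∞)`; in particular the solution remains in
the box `[min_i x0 i, max_i x0 i]^n` for all `t ≥ 0`. -/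
theorem filippov_solution_shrinking
    (n : ℕ) (hn : 0 < n) (L : Matrix (Fin n) (Fin n) ℝ)
    (hL1 : ∀ i j, i ≠ j → L i j ≤ 0) (hL2 : ∀ i, ∑ j, L i j = 0)
    (g : ℝ → ℝ) (hg : StrictMono g)
    (x0 : Fin n → ℝ) (x γ : ℝ → Fin n → ℝ)
    (hxcont : Continuous x) (hγmeas : Measurable γ)
    (hγint : LocallyIntegrable γ volume)
    (hγK : ∀ᵐ t ∂volume, 0 ≤ t →
      ∀ j, γ t j ∈ Set.Icc (leftLim g (x t j)) (rightLim g (x t j)))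
    (hsol : ∀ t, 0 ≤ t → ∀ i,
      x t i = x0 i - ∫ s in (0:ℝ)..t, ∑ j, L i j * γ s j) :
    AntitoneOn (fun t => vecMax hn (x t)) (Set.Ici (0:ℝ)) ∧
    MonotoneOn (fun t => vecMin hn (x t)) (Set.Ici (0:ℝ)) ∧
    ∀ t, 0 ≤ t → ∀ i, x t i ∈ Set.Icc (vecMin hn x0) (vecMax hn x0) := by
  have : Nonempty (Fin n) := ⟨⟨0, hn⟩⟩
  exact filippov_solution_shrinking_general ⟨hL1, hL2⟩
    ⟨fun _ _ => (hγint.integrableOn_isCompact isCompact_uIcc).intervalIntegrable,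
      hγK.mono fun _ hK ht => monovary_of_forall_mem_Icc_leftLim_rightLim hg.monotone (hK ht), hsol⟩
end

section
/- (Necessity part of Theorem 1.) Let L be a graph Laplacian such that G(L) does not have a spanning tree, and let g : ℝ → ℝ be strictly increasing. Then there exists an initial value x0 : Fin n → ℝ and a Filippov solution (x, γ) of the protocol ẋ_i = -∑_j L i j g(x_j) with initial value x0 such that for no c ∈ ℝ do all components x t i converge to c as t → ∞; i.e., consensus fails for some initial value. -/
open MeasureTheory Function Filter

/-!
In a finite digraph without a root, some two vertices have no common ancestor. The ancestors of a
vertex receive no edges from outside, so the Laplacian has a nonzero left null vector supported on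
them; the two disjoint ancestor sets thus make the left kernel, and hence the right kernel, at
least two-dimensional. A right null vector outside the line of constant vectors can be rescaled to
take values in `[g 0, g 1]`, with both endpoints attained, and the Filippov extension of `g` takes
every value of that interval. This yields an equilibrium with one component at `0` and another
at `1`.
-/

section Reachability

variable {α : Type*} {r : α → α → Prop}

theorem exists_disjoint_ancestors_of_no_root [Finite α] [Nonempty α]
    (hroot : ¬ ∃ a, ∀ b, Relation.ReflTransGen r a b) :
    ∃ u v, Disjoint {z | Relation.ReflTransGen r z u} {z | Relation.ReflTransGen r z v} := by
  contrapose! hroot with hcommon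
  have : IsTrans α (fun a b => Relation.ReflTransGen r b a) := ⟨fun _ _ _ hab hbc => hbc.trans hab⟩
  have hdirected : Directed (fun a b => Relation.ReflTransGen r b a) (id : α → α) :=
    fun u v => Set.not_disjoint_iff.1 (hcommon u v)
  exact hdirected.finite_le id

end Reachability

section LinearAlgebra

open Matrix
open Module (finrank)

variable {ι K : Type*} [Field K]

theorem linearIndependent_pair_of_disjoint_support {v w : ι → K} (hv : v ≠ 0) (hw : w ≠ 0)
    (hvw : Disjoint (support v) (support w)) : LinearIndependent K ![v, w] := by
  rw [LinearIndependent.pair_iff' hv]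
  rintro a rfl
  have hself := hvw.mono_left (support_const_smul_subset a v)
  exact hw (support_eq_empty_iff.1 (disjoint_self.1 hself))

theorem exists_apply_ne_of_two_le_finrank {V : Submodule K (ι → K)} (hV : 2 ≤ finrank K V) :
    ∃ v ∈ V, ∃ p q, v p ≠ v q := by
  have hconst : ¬ V ≤ K ∙ (1 : ι → K) := fun hle => by
    have hone : finrank K (K ∙ (1 : ι → K)) ≤ 1 := by
      simpa using finrank_span_le_card (R := K) {(1 : ι → K)}
    exact absurd (hV.trans ((Submodule.finrank_mono hle).trans hone)) (by norm_num)
  obtain ⟨v, hvV, hv⟩ := SetLike.not_le_iff_exists.1 hconst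
  refine ⟨v, hvV, ?_⟩
  contrapose! hv with hpq
  rw [Submodule.mem_span_singleton]
  rcases isEmpty_or_nonempty ι with _ | ⟨⟨p⟩⟩
  · exact ⟨0, Subsingleton.elim _ _⟩
  · exact ⟨v p, funext fun q => by simp [hpq q p]⟩

variable [Fintype ι]

theorem finrank_ker_mulVecLin_transpose (A : Matrix ι ι K) :
    finrank K Aᵀ.mulVecLin.ker = finrank K A.mulVecLin.ker := by
  have hrank : finrank K Aᵀ.mulVecLin.range = finrank K A.mulVecLin.range := A.rank_transpose
  have hA := A.mulVecLin.finrank_range_add_finrank_ker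
  have hAt := Aᵀ.mulVecLin.finrank_range_add_finrank_ker
  lia

-- The matrix `1 - D + D * L` kills `D *ᵥ v`, so it is singular; any left null vector of it works.
theorem exists_vecMul_eq_self_and_vecMul_eq_zero {D L : Matrix ι ι K} {v : ι → K}
    (hD : IsIdempotentElem D) (hDL : D * L * D = D * L) (hv : L *ᵥ v = 0) (hDv : D *ᵥ v ≠ 0) :
    ∃ w ≠ 0, w ᵥ* D = w ∧ w ᵥ* L = 0 := by
  classical
  have hND : (1 - D + D * L) * D = D * L := by
    rw [add_mul, sub_mul, one_mul, hD.eq, sub_self, zero_add, hDL]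
  have hnull : (1 - D + D * L) *ᵥ (D *ᵥ v) = 0 := by
    rw [mulVec_mulVec, hND, ← mulVec_mulVec, hv, mulVec_zero]
  obtain ⟨w, hw, hwN⟩ :=
    exists_vecMul_eq_zero_iff.2 (exists_mulVec_eq_zero_iff.1 ⟨_, hDv, hnull⟩)
  have hwDL : w ᵥ* (D * L) = 0 := by
    rw [← hND, ← vecMul_vecMul, hwN, zero_vecMul]
  have hwD : w ᵥ* D = w := by
    rw [vecMul_add, vecMul_sub, vecMul_one, hwDL, add_zero, sub_eq_zero] at hwN
    exact hwN.symm
  exact ⟨w, hw, hwD, by rw [← hwD, vecMul_vecMul, hwDL]⟩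

theorem exists_vecMul_eq_zero_support_subset {L : Matrix ι ι K} (hL : L *ᵥ 1 = 0)
    {S : Set ι} (hS : S.Nonempty) (hclosed : ∀ i ∈ S, ∀ j ∉ S, L i j = 0) :
    ∃ w ≠ 0, support w ⊆ S ∧ w ᵥ* L = 0 := by
  classical
  let D : Matrix ι ι K := diagonal (S.indicator 1)
  have hD : IsIdempotentElem D := by
    rw [IsIdempotentElem, diagonal_mul_diagonal, ← Set.indicator_mul]
    simp [D, Pi.one_def]
  have hDL : D * L * D = D * L := by
    ext i j
    by_cases hi : i ∈ S <;> by_cases hj : j ∈ S <;> simp [D, hi, hj, hclosed]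
  have hDone : D *ᵥ 1 ≠ 0 := by
    obtain ⟨i, hi⟩ := hS
    exact ne_iff.2 ⟨i, by simp [D, mulVec_diagonal, hi]⟩
  obtain ⟨w, hw, hwD, hwL⟩ := exists_vecMul_eq_self_and_vecMul_eq_zero hD hDL hL hDone
  refine ⟨w, hw, support_subset_iff'.2 fun i hi => ?_, hwL⟩
  rw [← hwD, vecMul_diagonal, Set.indicator_of_notMem hi, mul_zero]

end LinearAlgebra

section Digraph

open Matrix
open Module (finrank)

variable {ι K : Type*}

/-- The edge relation of the weighted digraph of a matrix `L`: vertex `j` influences vertex `i`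
when the off-diagonal entry `L i j` is nonzero. For a graph Laplacian, whose off-diagonal entries
are nonpositive, these are the edges of `G(L)`. -/
def Influences [Zero K] (L : Matrix ι ι K) (j i : ι) : Prop := j ≠ i ∧ L i j ≠ 0

theorem apply_eq_zero_of_reflTransGen_influences [Zero K] {L : Matrix ι ι K} {u i j : ι}
    (hi : Relation.ReflTransGen (Influences L) i u)
    (hj : ¬ Relation.ReflTransGen (Influences L) j u) : L i j = 0 := by
  by_contra hij
  exact hj (.head ⟨fun h => hj (h ▸ hi), hij⟩ hi)

theorem exists_mulVec_eq_zero_apply_ne [Field K] [Fintype ι] [Nonempty ι] {L : Matrix ι ι K}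
    (hL : L *ᵥ 1 = 0) (hroot : ¬ ∃ r, ∀ w, Relation.ReflTransGen (Influences L) r w) :
    ∃ v : ι → K, L *ᵥ v = 0 ∧ ∃ p q, v p ≠ v q := by
  obtain ⟨a, b, hab⟩ := exists_disjoint_ancestors_of_no_root hroot
  have exists_left_null (u : ι) : ∃ w ≠ 0,
      support w ⊆ {z | Relation.ReflTransGen (Influences L) z u} ∧ w ᵥ* L = 0 :=
    exists_vecMul_eq_zero_support_subset hL ⟨u, .refl⟩
      fun _ hi _ hj => apply_eq_zero_of_reflTransGen_influences hi hj
  obtain ⟨w₁, hw₁, hsupp₁, hnull₁⟩ := exists_left_null a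
  obtain ⟨w₂, hw₂, hsupp₂, hnull₂⟩ := exists_left_null b
  have hindep := linearIndependent_pair_of_disjoint_support hw₁ hw₂ (hab.mono hsupp₁ hsupp₂)
  have hspan : Submodule.span K (Set.range ![w₁, w₂]) ≤ Lᵀ.mulVecLin.ker := by
    simp [Submodule.span_le, Set.insert_subset_iff, hnull₁, hnull₂]
  have hker : 2 ≤ finrank K L.mulVecLin.ker := by
    rw [← finrank_ker_mulVecLin_transpose]
    simpa [finrank_span_eq_card hindep] using Submodule.finrank_mono hspan
  exact exists_apply_ne_of_two_le_finrank hker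

end Digraph

theorem exists_affine_mem_Icc_and_attains {ι K : Type*} [Finite ι] [Field K] [LinearOrder K]
    [IsStrictOrderedRing K] {v : ι → K} (hv : ∃ p q, v p ≠ v q) {α β : K} (hαβ : α ≤ β) :
    ∃ k c : K, (∀ j, k * v j + c ∈ Set.Icc α β) ∧
      ∃ p q, p ≠ q ∧ k * v p + c = α ∧ k * v q + c = β := by
  obtain ⟨i, j, hij⟩ := hv
  have : Nonempty ι := ⟨i⟩
  obtain ⟨p, hp⟩ := Finite.exists_min v
  obtain ⟨q, hq⟩ := Finite.exists_max v
  have hpq : v p < v q := by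
    by_contra! hqp
    exact hij (((hq i).trans (hqp.trans (hp j))).antisymm ((hq j).trans (hqp.trans (hp i))))
  obtain ⟨k, hk, hkpq⟩ : ∃ k, 0 ≤ k ∧ k * (v q - v p) = β - α :=
    ⟨(β - α) / (v q - v p), div_nonneg (sub_nonneg.2 hαβ) (sub_nonneg.2 hpq.le),
      div_mul_cancel₀ _ (sub_pos.2 hpq).ne'⟩
  refine ⟨k, α - k * v p, fun j => ⟨?_, ?_⟩, p, q, ne_of_apply_ne v hpq.ne, ?_, ?_⟩
  · linarith [mul_le_mul_of_nonneg_left (hp j) hk]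
  · linarith [mul_le_mul_of_nonneg_left (hq j) hk]
  · ring
  · linarith

section FilippovExtension

variable {α β : Type*} [ConditionallyCompleteLinearOrder α] [TopologicalSpace α] [OrderTopology α]
  [DenselyOrdered α] [NoMinOrder α] [NoMaxOrder α]
  [ConditionallyCompleteLinearOrder β] [TopologicalSpace β] [OrderTopology β]

theorem exists_mem_Icc_leftLim_rightLim {g : α → β} (hg : Monotone g) {a b : α} (hab : a ≤ b)
    {y : β} (hy : y ∈ Set.Icc (g a) (g b)) : ∃ z, y ∈ Set.Icc (leftLim g z) (rightLim g z) := by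
  let S : Set α := {z | z ≤ b ∧ g z ≤ y}
  have hbdd : BddAbove S := ⟨b, fun _ hz => hz.1⟩
  have hne : S.Nonempty := ⟨a, hab, hy.1⟩
  refine ⟨sSup S, le_of_tendsto (hg.tendsto_leftLim _) ?_,
    ge_of_tendsto (hg.tendsto_rightLim _) ?_⟩
  · filter_upwards [self_mem_nhdsWithin] with t ht
    obtain ⟨s, hs, hts⟩ := exists_lt_of_lt_csSup hne ht
    exact (hg hts.le).trans hs.2
  · filter_upwards [self_mem_nhdsWithin] with t ht
    by_contra! hty
    have htb : t ≤ b := (hg.reflect_lt (hty.trans_le hy.2)).le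
    exact ht.not_ge (le_csSup hbdd ⟨htb, hty.le⟩)

end FilippovExtension

section Equilibria

open Matrix

variable {ι : Type*} [Fintype ι] {L : Matrix ι ι ℝ} {g : ℝ → ℝ}

theorem exists_equilibrium_apply_ne [Nonempty ι] (hL : L *ᵥ 1 = 0)
    (hroot : ¬ ∃ r, ∀ w, Relation.ReflTransGen (Influences L) r w) (hg : Monotone g) :
    ∃ x y : ι → ℝ, (∀ j, y j ∈ Set.Icc (leftLim g (x j)) (rightLim g (x j))) ∧
      L *ᵥ y = 0 ∧ ∃ p q, x p ≠ x q := by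
  classical
  obtain ⟨v, hLv, hv⟩ := exists_mulVec_eq_zero_apply_ne hL hroot
  obtain ⟨k, c, hmem, p, q, hpq, hp, hq⟩ :=
    exists_affine_mem_Icc_and_attains hv (hg zero_le_one)
  choose x hx using fun j => exists_mem_Icc_leftLim_rightLim hg zero_le_one (hmem j)
  have hself (z : ℝ) : g z ∈ Set.Icc (leftLim g z) (rightLim g z) :=
    ⟨hg.leftLim_le le_rfl, hg.le_rightLim le_rfl⟩
  -- `x p = x q` is possible, e.g. if one jump of `g` covers `[g 0, g 1]`; hence the updates.
  refine ⟨update (update x p 0) q 1, fun j => k * v j + c, fun j => ?_, ?_, p, q, ?_⟩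
  · rcases eq_or_ne j q with rfl | hjq
    · simpa [hq] using hself 1
    rcases eq_or_ne j p with rfl | hjp
    · simpa [hp, hjq] using hself 0
    · simpa [hjq, hjp] using hx j
  · have haffine : (fun j => k * v j + c) = k • v + c • (1 : ι → ℝ) := by ext; simp
    rw [haffine, mulVec_add, mulVec_smul, mulVec_smul, hLv, hL, smul_zero, smul_zero, add_zero]
  · simp [hpq]

theorem no_consensus_of_no_spanning_tree_general [Nonempty ι] (hL : ∀ i, ∑ j, L i j = 0)
    (hroot : ¬ ∃ r, ∀ w, Relation.ReflTransGen (Influences L) r w) (hg : Monotone g) :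
    ∃ (x0 : ι → ℝ) (x γ : ℝ → ι → ℝ),
      Continuous x ∧ Measurable γ ∧ LocallyIntegrable γ volume ∧
      (∀ᵐ t ∂volume, 0 ≤ t →
        ∀ j, γ t j ∈ Set.Icc (leftLim g (x t j)) (rightLim g (x t j))) ∧
      (∀ t, 0 ≤ t → ∀ i,
        x t i = x0 i - ∫ s in (0:ℝ)..t, ∑ j, L i j * γ s j) ∧
      ∀ c : ℝ, ¬ (∀ i, Tendsto (fun t => x t i) atTop (nhds c)) := by
  have hLone : L *ᵥ 1 = 0 := funext fun i => by simpa [mulVec, dotProduct] using hL i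
  obtain ⟨x0, y, hy, hLy, p, q, hpq⟩ := exists_equilibrium_apply_ne hLone hroot hg
  refine ⟨x0, fun _ => x0, fun _ => y, continuous_const, measurable_const,
    locallyIntegrable_const y, .of_forall fun _ _ => hy, fun t _ i => ?_, fun c hc => hpq ?_⟩
  · have hLyi : ∑ j, L i j * y j = 0 := congrFun hLy i
    simp [hLyi]
  · rw [tendsto_const_nhds_iff.1 (hc p), tendsto_const_nhds_iff.1 (hc q)]

end Equilibria

/-- necessity part of Theorem 1: If `G(L)` does not have a spanning tree,
then there is an initial value `x0` and a Filippov solution of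
`ẋ_i = -∑_j L i j g(x_j)` starting at `x0` whose components do not all converge to a
common value; i.e., consensus fails for some initial value. -/
theorem no_consensus_of_no_spanning_tree
    (n : ℕ) (hn : 0 < n) (L : Matrix (Fin n) (Fin n) ℝ)
    (hL1 : ∀ i j, i ≠ j → L i j ≤ 0) (hL2 : ∀ i, ∑ j, L i j = 0)
    (hnoroot : ¬ ∃ r : Fin n, ∀ w : Fin n,
      Relation.ReflTransGen (fun a b => a ≠ b ∧ L b a < 0) r w)
    (g : ℝ → ℝ) (hg : StrictMono g) :
    ∃ (x0 : Fin n → ℝ) (x γ : ℝ → Fin n → ℝ),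
      Continuous x ∧ Measurable γ ∧ LocallyIntegrable γ volume ∧
      (∀ᵐ t ∂volume, 0 ≤ t →
        ∀ j, γ t j ∈ Set.Icc (leftLim g (x t j)) (rightLim g (x t j))) ∧
      (∀ t, 0 ≤ t → ∀ i,
        x t i = x0 i - ∫ s in (0:ℝ)..t, ∑ j, L i j * γ s j) ∧
      ∀ c : ℝ, ¬ (∀ i, Tendsto (fun t => x t i) atTop (nhds c)) := by
  have : Nonempty (Fin n) := Fin.pos_iff_nonempty.1 hn
  refine no_consensus_of_no_spanning_tree_general hL2
    (fun ⟨r, hr⟩ => hnoroot ⟨r, fun w => ?_⟩) hg.monotone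
  exact .mono (fun a b ⟨hab, hne⟩ => ⟨hab, (hL1 b a hab.symm).lt_of_ne hne⟩) r w (hr w)
end

section
/- Let L be a graph Laplacian such that G(L) is strongly connected, and let ξ : Fin n → ℝ satisfy ξ i > 0 for all i and ∑ i, ξ i * L i j = 0 for every j. Then the symmetric matrix Ξ L + Lᵀ Ξ, where Ξ = diagonal matrix of ξ, is positive semidefinite: for every v : Fin n → ℝ, ∑ i, ∑ j, (ξ i * L i j + ξ j * L j i) * v i * v j ≥ 0, and equality holds if and only if v is constant (v i = v j for all i, j). -/
/-!
The matrix `W i j = ξ i * L i j` has zero row sums (because `L` does) and zero column sums (because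
`ξ` is a left null vector). For such a matrix the terms `W i j * v i ^ 2` and the terms
`W i j * v j ^ 2` both sum to zero, so completing the square turns the quadratic form of `W + Wᵀ`
into `∑ i, ∑ j, -W i j * (v i - v j) ^ 2`. Every summand is nonnegative, and all of them vanish
exactly when `v` agrees at the two ends of each edge, that is, when `v` is constant on each weakly
connected component.
-/

section ZeroRowAndColumnSums

variable {ι R : Type*} [Fintype ι]

theorem sum_mul_mul_transpose_comm [CommSemiring R] (W : Matrix ι ι R) (v : ι → R) :
    ∑ i, ∑ j, W j i * v i * v j = ∑ i, ∑ j, W i j * v i * v j := by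
  rw [Finset.sum_comm]
  simp only [mul_right_comm]

theorem sum_add_transpose_mul_mul_eq_sum_neg_mul_sub_sq [CommRing R] {W : Matrix ι ι R}
    (row_sum : ∀ i, ∑ j, W i j = 0) (col_sum : ∀ j, ∑ i, W i j = 0) (v : ι → R) :
    ∑ i, ∑ j, (W i j + W j i) * v i * v j = ∑ i, ∑ j, -W i j * (v i - v j) ^ 2 := by
  have row_sq : ∑ i, ∑ j, W i j * v i ^ 2 = 0 := by
    simp only [← Finset.sum_mul, row_sum, zero_mul, Finset.sum_const_zero]
  have col_sq : ∑ i, ∑ j, W i j * v j ^ 2 = 0 := by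
    rw [Finset.sum_comm]
    simp only [← Finset.sum_mul, col_sum, zero_mul, Finset.sum_const_zero]
  calc ∑ i, ∑ j, (W i j + W j i) * v i * v j
      = ∑ i, ∑ j, W i j * v i * v j + ∑ i, ∑ j, W j i * v i * v j := by
        simp only [add_mul, Finset.sum_add_distrib]
    _ = ∑ i, ∑ j, W i j * v i * v j + ∑ i, ∑ j, W i j * v i * v j
          - ∑ i, ∑ j, W i j * v i ^ 2 - ∑ i, ∑ j, W i j * v j ^ 2 := by
        rw [sum_mul_mul_transpose_comm, row_sq, col_sq, sub_zero, sub_zero]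
    _ = ∑ i, ∑ j, -W i j * (v i - v j) ^ 2 := by
        simp only [← Finset.sum_add_distrib, ← Finset.sum_sub_distrib]
        exact Finset.sum_congr rfl fun i _ => Finset.sum_congr rfl fun j _ => by ring

end ZeroRowAndColumnSums

section NonposOffDiagonal

variable {ι R : Type*} [CommRing R] [LinearOrder R] {W : Matrix ι ι R}

theorem neg_mul_sub_sq_nonneg [IsOrderedRing R] (off_diag : ∀ i j, i ≠ j → W i j ≤ 0)
    (v : ι → R) (i j : ι) : 0 ≤ -W i j * (v i - v j) ^ 2 := by
  obtain rfl | hij := eq_or_ne i j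
  · simp
  · exact mul_nonneg (neg_nonneg.mpr (off_diag i j hij)) (sq_nonneg _)

theorem sum_neg_mul_sub_sq_nonneg [Fintype ι] [IsOrderedRing R]
    (off_diag : ∀ i j, i ≠ j → W i j ≤ 0) (v : ι → R) :
    0 ≤ ∑ i, ∑ j, -W i j * (v i - v j) ^ 2 :=
  Finset.sum_nonneg fun i _ => Finset.sum_nonneg fun j _ => neg_mul_sub_sq_nonneg off_diag v i j

theorem sum_neg_mul_sub_sq_eq_zero_iff [Fintype ι] [IsStrictOrderedRing R]
    (off_diag : ∀ i j, i ≠ j → W i j ≤ 0) (v : ι → R) :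
    ∑ i, ∑ j, -W i j * (v i - v j) ^ 2 = 0 ↔ ∀ i j, W i j ≠ 0 → v i = v j := by
  have term_nonneg := neg_mul_sub_sq_nonneg off_diag v
  have term_eq_zero_iff (i j : ι) :
      -W i j * (v i - v j) ^ 2 = 0 ↔ (W i j ≠ 0 → v i = v j) := by
    rw [mul_eq_zero, neg_eq_zero, sq_eq_zero_iff, sub_eq_zero, or_iff_not_imp_left]
  rw [Finset.sum_eq_zero_iff_of_nonneg fun i _ => Finset.sum_nonneg fun j _ => term_nonneg i j]
  simp only [Finset.mem_univ, true_imp_iff,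
    Finset.sum_eq_zero_iff_of_nonneg fun j _ => term_nonneg _ j, term_eq_zero_iff]

end NonposOffDiagonal

theorem apply_eq_apply_of_eqvGen {α β : Type*} {r : α → α → Prop} {f : α → β}
    (hf : ∀ a b, r a b → f a = f b) {a b : α} (hab : Relation.EqvGen r a b) : f a = f b :=
  congrArg (Quot.lift f hf) (Quot.eqvGen_sound hab)

theorem xiL_plus_LtXi_posSemidef_general {ι R : Type*} [Fintype ι] [CommRing R] [LinearOrder R]
    [IsStrictOrderedRing R] {L : Matrix ι ι R}
    (off_diag : ∀ i j, i ≠ j → L i j ≤ 0) (row_sum : ∀ i, ∑ j, L i j = 0)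
    (weakly_connected : ∀ u w, Relation.EqvGen (fun a b => L b a < 0) u w)
    {ξ : ι → R} (ξ_pos : ∀ i, 0 < ξ i) (ξ_left_null : ∀ j, ∑ i, ξ i * L i j = 0) (v : ι → R) :
    0 ≤ ∑ i, ∑ j, (ξ i * L i j + ξ j * L j i) * v i * v j ∧
      (∑ i, ∑ j, (ξ i * L i j + ξ j * L j i) * v i * v j = 0 ↔ ∀ i j, v i = v j) := by
  let W : Matrix ι ι R := fun i j => ξ i * L i j
  have W_row_sum (i : ι) : ∑ j, W i j = 0 := by
    rw [← Finset.mul_sum, row_sum, mul_zero]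
  have W_off_diag (i j : ι) (hij : i ≠ j) : W i j ≤ 0 :=
    mul_nonpos_of_nonneg_of_nonpos (ξ_pos i).le (off_diag i j hij)
  have square_form : ∑ i, ∑ j, (ξ i * L i j + ξ j * L j i) * v i * v j
      = ∑ i, ∑ j, -W i j * (v i - v j) ^ 2 :=
    sum_add_transpose_mul_mul_eq_sum_neg_mul_sub_sq W_row_sum ξ_left_null v
  rw [square_form, sum_neg_mul_sub_sq_eq_zero_iff W_off_diag]
  refine ⟨sum_neg_mul_sub_sq_nonneg W_off_diag v, fun eq_on_edges u w => ?_,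
    fun const i j _ => const i j⟩
  have eq_of_edge (a b : ι) (hab : L b a < 0) : v a = v b :=
    (eq_on_edges b a (mul_neg_of_pos_of_neg (ξ_pos b) hab).ne).symm
  exact apply_eq_apply_of_eqvGen eq_of_edge (weakly_connected u w)

/-- If `G(L)` is strongly connected and `ξ` is a positive left null
vector of `L`, then `Ξ L + Lᵀ Ξ` is positive semidefinite, with the quadratic form
vanishing exactly on constant vectors. -/
theorem xiL_plus_LtXi_posSemidef
    (n : ℕ) (L : Matrix (Fin n) (Fin n) ℝ)
    (hL1 : ∀ i j, i ≠ j → L i j ≤ 0) (hL2 : ∀ i, ∑ j, L i j = 0)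
    (hsc : ∀ u w : Fin n,
      Relation.ReflTransGen (fun a b => a ≠ b ∧ L b a < 0) u w)
    (ξ : Fin n → ℝ) (hξpos : ∀ i, 0 < ξ i)
    (hξ : ∀ j, ∑ i, ξ i * L i j = 0) :
    ∀ v : Fin n → ℝ,
      0 ≤ ∑ i, ∑ j, (ξ i * L i j + ξ j * L j i) * v i * v j ∧
      ((∑ i, ∑ j, (ξ i * L i j + ξ j * L j i) * v i * v j) = 0 ↔ ∀ i j, v i = v j) :=
  xiL_plus_LtXi_posSemidef_general hL1 hL2
    (fun u w => Relation.EqvGen.reflTransGen_le_eqvGen _ _ _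
      (Relation.ReflTransGen.mono (fun _ _ edge => edge.2) _ _ (hsc u w))) hξpos hξ
end

section
/- (Key contraction estimate in the proof of Theorem 2.) Let n ≥ 2, let L be a graph Laplacian, and let g : ℝ → ℝ be strictly increasing and satisfy the ε-separation condition for some ε > 0: for all α ≠ β and all v₁ ∈ K[g](α), v₂ ∈ K[g](β), one has (v₁ - v₂)/(α - β) ≥ ε. Then every Filippov solution (x, γ) of the protocol ẋ_i = -∑_j L i j g(x_j) satisfies, for all 0 ≤ s ≤ t, max_i x t i - min_i x t i ≤ exp(-ε · η(-L) · (t - s)) · (max_i x s i - min_i x s i). -/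
open MeasureTheory Function

/-- `η(-L)`: the minimum over pairs `i ≠ j` of
`(-L i j) + (-L j i) + ∑_{k ≠ i, j} min (-L i k) (-L j k)`. -/
noncomputable def etaNeg {n : ℕ} (L : Matrix (Fin n) (Fin n) ℝ) : ℝ :=
  sInf {x : ℝ | ∃ i j : Fin n, i ≠ j ∧
    x = (-L i j) + (-L j i) +
      ∑ k ∈ Finset.univ.filter (fun k => k ≠ i ∧ k ≠ j), min (-L i k) (-L j k)}

/-!
Let `V` be the spread (maximum minus minimum) of the state. Along a solution `V` is absolutely
continuous, so it suffices to bound its derivative almost everywhere. At such a time, choose among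
the maximizers of `x` one, `i`, with the largest selection value `γ i`, and dually `j` among the
minimizers; since `γ` is increasing in `x`, these also are the extremal indices of `γ` itself.
The function `V - (x i - x j)` is nonnegative and vanishes at that time, so
`V' = -(L γ) i + (L γ) j`, and splitting off the part of the rows `i` and `j` of `-L` that they
have in common bounds this by `-η (γ i - γ j) ≤ -η ε V`. Grönwall's inequality concludes.
-/

open scoped NNReal Matrix

section AbsoluteContinuity

variable {a b : ℝ}

lemma absolutelyContinuousOnInterval_lipschitzWith_comp {X Y : Type*} [PseudoMetricSpace X]
    [PseudoMetricSpace Y] {φ : X → Y} {C : ℝ≥0} (hφ : LipschitzWith C φ) {f : ℝ → X}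
    (hf : AbsolutelyContinuousOnInterval f a b) :
    AbsolutelyContinuousOnInterval (fun r => φ (f r)) a b := by
  refine squeeze_zero (fun E => by positivity) (fun E => ?_)
    (by simpa only [mul_zero] using Filter.Tendsto.const_mul (C : ℝ) hf)
  rw [Finset.mul_sum]
  exact Finset.sum_le_sum fun k _ => hφ.dist_le_mul _ _

lemma absolutelyContinuousOnInterval_pi {ι : Type*} [Fintype ι] {X : ι → Type*}
    [∀ i, PseudoMetricSpace (X i)] {f : ℝ → ∀ i, X i}
    (hf : ∀ i, AbsolutelyContinuousOnInterval (fun r => f r i) a b) :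
    AbsolutelyContinuousOnInterval f a b := by
  refine squeeze_zero (fun E => by positivity) (fun E => ?_)
    (by simpa only [Finset.sum_const_zero] using
      tendsto_finsetSum Finset.univ fun i _ => hf i)
  rw [Finset.sum_comm]
  refine Finset.sum_le_sum fun k _ => (dist_pi_le_iff (by positivity)).2 fun i => ?_
  exact Finset.single_le_sum (f := fun i => dist (f (E.2 k).1 i) (f (E.2 k).2 i))
    (fun _ _ => dist_nonneg) (Finset.mem_univ i)

lemma le_of_ae_deriv_nonpos {f : ℝ → ℝ} (hab : a ≤ b) (hf : AbsolutelyContinuousOnInterval f a b)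
    (hderiv : ∀ᵐ r, r ∈ Set.Icc a b → deriv f r ≤ 0) : f b ≤ f a := by
  have hint : ∫ r in a..b, deriv f r ≤ 0 := by
    rw [intervalIntegral.integral_of_le hab]
    refine integral_nonpos_of_ae ((ae_restrict_iff' measurableSet_Ioc).2 ?_)
    filter_upwards [hderiv] with r hr hmem using hr (Set.Ioc_subset_Icc_self hmem)
  rw [hf.integral_deriv_eq_sub] at hint
  exact sub_nonpos.1 hint

lemma le_exp_mul_of_ae_deriv_le {f : ℝ → ℝ} {c : ℝ} (hab : a ≤ b)
    (hf : AbsolutelyContinuousOnInterval f a b)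
    (hderiv : ∀ᵐ r, r ∈ Set.Icc a b → deriv f r ≤ c * f r) :
    f b ≤ Real.exp (c * (b - a)) * f a := by
  let weight : ℝ → ℝ := fun r => Real.exp (-(c * (r - a)))
  have hweight (r : ℝ) : HasDerivAt weight (weight r * -c) r := by
    simpa using (((hasDerivAt_id r).sub_const a).const_mul c).neg.exp
  have hweight_ac : AbsolutelyContinuousOnInterval weight a b :=
    ContDiffOn.absolutelyContinuousOnInterval (by fun_prop)
  have hdecay : weight b * f b ≤ weight a * f a := by
    refine le_of_ae_deriv_nonpos hab (hweight_ac.fun_mul hf) ?_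
    filter_upwards [hderiv, hf.ae_differentiableAt] with r hr hdiff hmem
    have hf' := (hdiff (Set.uIcc_of_le hab ▸ hmem)).hasDerivAt
    rw [((hweight r).fun_mul hf').deriv]
    calc weight r * -c * f r + weight r * deriv f r
        = weight r * (deriv f r - c * f r) := by ring
      _ ≤ 0 := mul_nonpos_of_nonneg_of_nonpos (Real.exp_pos _).le (sub_nonpos.2 (hr hmem))
  calc f b = Real.exp (c * (b - a)) * (weight b * f b) := by
        rw [← mul_assoc, ← Real.exp_add, add_neg_cancel, Real.exp_zero, one_mul]
    _ ≤ Real.exp (c * (b - a)) * (weight a * f a) := by gcongr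
    _ = Real.exp (c * (b - a)) * f a := by simp [weight]

end AbsoluteContinuity

lemma mulVec_eq_sum_mul_sub {ι κ : Type*} [Fintype κ] {A : Matrix ι κ ℝ} {i : ι}
    (hrow : ∑ k, A i k = 0) (w : κ → ℝ) (c : ℝ) : (A *ᵥ w) i = ∑ k, A i k * (w k - c) := by
  simp [Matrix.mulVec, dotProduct, mul_sub, ← Finset.sum_mul, hrow]

section Scrambling

variable {ι : Type*} [Fintype ι] [DecidableEq ι]

/-- The quantity attached to the pair `i, j` in the definition of `η(-L)`: the weight of the edges
between `i` and `j` plus the weight that they jointly receive from the other vertices. -/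
def pairScrambling (L : Matrix ι ι ℝ) (i j : ι) : ℝ :=
  (-L i j) + (-L j i) +
    ∑ k ∈ Finset.univ.filter (fun k => k ≠ i ∧ k ≠ j), min (-L i k) (-L j k)

lemma pairScrambling_nonneg {L : Matrix ι ι ℝ} (hoff : ∀ i j, i ≠ j → L i j ≤ 0) {i j : ι}
    (hij : i ≠ j) : 0 ≤ pairScrambling L i j := by
  refine add_nonneg (add_nonneg (neg_nonneg.2 (hoff i j hij)) (neg_nonneg.2 (hoff j i hij.symm)))
    (Finset.sum_nonneg fun k hk => ?_)
  obtain ⟨hki, hkj⟩ := (Finset.mem_filter.1 hk).2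
  exact le_min (neg_nonneg.2 (hoff i k hki.symm)) (neg_nonneg.2 (hoff j k hkj.symm))

lemma pairScrambling_mul_le {L : Matrix ι ι ℝ} (hrow : ∀ i, ∑ j, L i j = 0) {w : ι → ℝ}
    {i j : ι} (hij : i ≠ j) (hmax : ∀ k, w k ≤ w i) (hmin : ∀ k, w j ≤ w k) :
    pairScrambling L i j * (w i - w j) ≤ (L *ᵥ w) i - (L *ᵥ w) j := by
  have hpair : Finset.univ.filter (fun k => ¬(k ≠ i ∧ k ≠ j)) = {i, j} := by
    ext k; simp [imp_iff_not_or]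
  have hothers (k : ι) : min (-L i k) (-L j k) * (w i - w j) ≤
      L i k * (w k - w i) - L j k * (w k - w j) :=
    calc min (-L i k) (-L j k) * (w i - w j)
        = min (-L i k) (-L j k) * (w i - w k) + min (-L i k) (-L j k) * (w k - w j) := by ring
      _ ≤ -L i k * (w i - w k) + -L j k * (w k - w j) :=
        add_le_add
          (mul_le_mul_of_nonneg_right (min_le_left _ _) (sub_nonneg.2 (hmax k)))
          (mul_le_mul_of_nonneg_right (min_le_right _ _) (sub_nonneg.2 (hmin k)))
      _ = L i k * (w k - w i) - L j k * (w k - w j) := by ring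
  rw [mulVec_eq_sum_mul_sub (hrow i) w (w i), mulVec_eq_sum_mul_sub (hrow j) w (w j),
    ← Finset.sum_sub_distrib,
    ← Finset.sum_filter_add_sum_filter_not _ (fun k => k ≠ i ∧ k ≠ j), hpair,
    Finset.sum_pair hij, pairScrambling, add_mul, Finset.sum_mul]
  linarith [Finset.sum_le_sum fun k (_ : k ∈ Finset.univ.filter (fun k => k ≠ i ∧ k ≠ j)) =>
    hothers k]

lemma etaNeg_le_pairScrambling {n : ℕ} (L : Matrix (Fin n) (Fin n) ℝ) {i j : Fin n}
    (hij : i ≠ j) : etaNeg L ≤ pairScrambling L i j := by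
  refine csInf_le (Set.Finite.bddBelow ?_) ⟨i, j, hij, rfl⟩
  refine (Set.finite_range fun p : Fin n × Fin n => pairScrambling L p.1 p.2).subset ?_
  rintro _ ⟨i, j, -, rfl⟩
  exact ⟨(i, j), rfl⟩

lemma etaNeg_nonneg {n : ℕ} {L : Matrix (Fin n) (Fin n) ℝ} (hoff : ∀ i j, i ≠ j → L i j ≤ 0) :
    0 ≤ etaNeg L := by
  refine Real.sInf_nonneg ?_
  rintro _ ⟨i, j, hij, rfl⟩
  exact pairScrambling_nonneg hoff hij

end Scrambling

lemma exists_common_max {ι α β : Type*} [Finite ι] [Nonempty ι] [LinearOrder α] [LinearOrder β]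
    {v : ι → α} {w : ι → β} (hvw : ∀ i j, v i < v j → w i ≤ w j) :
    ∃ i, (∀ k, v k ≤ v i) ∧ ∀ k, w k ≤ w i := by
  obtain ⟨i, hi⟩ := Finite.exists_max fun k => toLex (v k, w k)
  refine ⟨i, fun k => ?_, fun k => ?_⟩ <;> rcases Prod.Lex.toLex_le_toLex.1 (hi k) with h | h
  exacts [h.le, h.1.le, hvw k i h, h.2]

section Spread

variable {ι : Type*} [Fintype ι] [Nonempty ι]

/-- The spread of a vector, its largest minus its smallest entry; for `ι = Fin n` this is
`vecMax - vecMin` by definition. It is the Lyapunov function of the consensus protocol. -/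
def spread (v : ι → ℝ) : ℝ :=
  Finset.univ.sup' Finset.univ_nonempty v - Finset.univ.inf' Finset.univ_nonempty v

lemma sub_le_spread (v : ι → ℝ) (i j : ι) : v i - v j ≤ spread v :=
  sub_le_sub (Finset.le_sup' v (Finset.mem_univ i)) (Finset.inf'_le v (Finset.mem_univ j))

lemma spread_eq_sub {v : ι → ℝ} {i j : ι} (hmax : ∀ k, v k ≤ v i) (hmin : ∀ k, v j ≤ v k) :
    spread v = v i - v j :=
  le_antisymm (sub_le_sub (Finset.sup'_le _ _ fun k _ => hmax k)
    (Finset.le_inf' _ _ fun k _ => hmin k)) (sub_le_spread v i j)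

lemma lipschitzWith_spread : LipschitzWith 2 (spread : (ι → ℝ) → ℝ) := by
  refine LipschitzWith.of_le_add_mul 2 fun u v => ?_
  obtain ⟨i, hi⟩ := Finite.exists_max u
  obtain ⟨j, hj⟩ := Finite.exists_min u
  have hui : u i - v i ≤ dist u v := (le_abs_self _).trans (dist_le_pi_dist u v i)
  have huj : v j - u j ≤ dist u v :=
    (neg_sub (u j) (v j) ▸ neg_le_abs _).trans (dist_le_pi_dist u v j)
  calc spread u = (v i - v j) + (u i - v i) + (v j - u j) := by rw [spread_eq_sub hi hj]; ring
    _ ≤ spread v + dist u v + dist u v := by gcongr; exact sub_le_spread v i j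
    _ = spread v + (2 : ℝ≥0) * dist u v := by push_cast; ring

variable {y : ℝ → ι → ℝ} {r d : ℝ}

lemma hasDerivAt_spread_eq_sub {y' : ι → ℝ} (hy : HasDerivAt y y' r)
    (hspread : HasDerivAt (fun q => spread (y q)) d r) {i j : ι} (hmax : ∀ k, y r k ≤ y r i)
    (hmin : ∀ k, y r j ≤ y r k) : d = y' i - y' j := by
  have hgap : IsLocalMin (fun q => spread (y q) - (y q i - y q j)) r := by
    refine Filter.Eventually.of_forall fun q => ?_
    simp only [spread_eq_sub hmax hmin, sub_self]
    exact sub_nonneg.2 (sub_le_spread (y q) i j)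
  have hcoord := hasDerivAt_pi.1 hy
  exact sub_eq_zero.1 (hgap.hasDerivAt_eq_zero (hspread.sub ((hcoord i).sub (hcoord j))))

variable [DecidableEq ι] {L : Matrix ι ι ℝ} {ε η : ℝ}

lemma hasDerivAt_spread_le (hrow : ∀ i, ∑ j, L i j = 0) (hη : 0 ≤ η)
    (hηL : ∀ i j, i ≠ j → η ≤ pairScrambling L i j) (hε : 0 ≤ ε) {w : ι → ℝ}
    (hsep : ∀ i j, y r i < y r j → ε * (y r j - y r i) ≤ w j - w i)
    (hy : HasDerivAt y (-(L *ᵥ w)) r) (hspread : HasDerivAt (fun q => spread (y q)) d r) :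
    d ≤ -ε * η * spread (y r) := by
  have hmono (i j : ι) (hlt : y r i < y r j) : w i ≤ w j :=
    sub_nonneg.1 ((mul_nonneg hε (sub_nonneg.2 hlt.le)).trans (hsep i j hlt))
  obtain ⟨i, hyi, hwi⟩ := exists_common_max hmono
  obtain ⟨j, hyj, hwj⟩ := exists_common_max (α := ℝᵒᵈ) (β := ℝᵒᵈ) fun i j => hmono j i
  have hd : d = -((L *ᵥ w) i - (L *ᵥ w) j) := by
    rw [hasDerivAt_spread_eq_sub hy hspread hyi hyj, Pi.neg_apply, Pi.neg_apply]; ring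
  rw [spread_eq_sub hyi hyj, hd]
  rcases eq_or_ne i j with rfl | hij
  · simp
  have hsep_ij : ε * (y r i - y r j) ≤ w i - w j := by
    rcases (hyi j).eq_or_lt with heq | hlt
    · simpa [heq] using hwi j
    · exact hsep j i hlt
  have hdissipation : η * (ε * (y r i - y r j)) ≤ (L *ᵥ w) i - (L *ᵥ w) j :=
    calc η * (ε * (y r i - y r j)) ≤ η * (w i - w j) := by gcongr
      _ ≤ pairScrambling L i j * (w i - w j) :=
        mul_le_mul_of_nonneg_right (hηL i j hij) (sub_nonneg.2 (hwi j))
      _ ≤ (L *ᵥ w) i - (L *ᵥ w) j := pairScrambling_mul_le hrow hij hwi hwj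
  linarith

lemma spread_le_exp_mul_spread (hrow : ∀ i, ∑ j, L i j = 0) (hη : 0 ≤ η)
    (hηL : ∀ i j, i ≠ j → η ≤ pairScrambling L i j) (hε : 0 ≤ ε) {w : ℝ → ι → ℝ} {s t : ℝ}
    (hst : s ≤ t) (hac : AbsolutelyContinuousOnInterval y s t)
    (hy : ∀ᵐ r, r ∈ Set.Icc s t → HasDerivAt y (-(L *ᵥ w r)) r)
    (hsep : ∀ᵐ r, r ∈ Set.Icc s t →
      ∀ i j, y r i < y r j → ε * (y r j - y r i) ≤ w r j - w r i) :
    spread (y t) ≤ Real.exp (-ε * η * (t - s)) * spread (y s) := by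
  have hspread_ac := absolutelyContinuousOnInterval_lipschitzWith_comp lipschitzWith_spread hac
  refine le_exp_mul_of_ae_deriv_le hst hspread_ac ?_
  filter_upwards [hy, hsep, hspread_ac.ae_differentiableAt] with r hyr hsepr hdiff hmem
  exact hasDerivAt_spread_le hrow hη hηL hε (hsepr hmem) (hyr hmem)
    (hdiff (Set.uIcc_of_le hst ▸ hmem)).hasDerivAt

end Spread

section IntegralCurve

variable {ι κ : Type*} [Fintype κ] {γ : ℝ → κ → ℝ}

lemma locallyIntegrable_mulVec_apply (hγ : LocallyIntegrable γ) (A : Matrix ι κ ℝ) (i : ι) :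
    LocallyIntegrable fun r => (A *ᵥ γ r) i := by
  rw [locallyIntegrable_iff] at hγ ⊢
  exact fun k hk => ((ContinuousLinearMap.proj (R := ℝ) (φ := fun _ : ι => ℝ) i).comp
    A.mulVecLin.toContinuousLinearMap).integrable_comp (hγ k hk)

/-- The primitive `r ↦ x0 - ∫₀ʳ A γ`. Unlike a solution of the protocol, it is given by this
formula at negative times too, so that it can be differentiated at almost every real time. -/
noncomputable def integralCurve (A : Matrix ι κ ℝ) (γ : ℝ → κ → ℝ) (x0 : ι → ℝ) (r : ℝ) : ι → ℝ :=
  fun i => x0 i - ∫ q in (0:ℝ)..r, (A *ᵥ γ q) i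

variable (A : Matrix ι κ ℝ) (x0 : ι → ℝ)

lemma ae_hasDerivAt_integralCurve [Finite ι] (hγ : LocallyIntegrable γ) :
    ∀ᵐ r, HasDerivAt (integralCurve A γ x0) (-(A *ᵥ γ r)) r := by
  cases nonempty_fintype ι
  have hcoord : ∀ᵐ r, ∀ i, HasDerivAt (fun q => integralCurve A γ x0 q i) (-(A *ᵥ γ r) i) r :=
    ae_all_iff.2 fun i => by
      filter_upwards [LocallyIntegrable.ae_hasDerivAt_integral
        (locallyIntegrable_mulVec_apply hγ A i)] with r hr
      exact (hr 0).const_sub (x0 i)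
  filter_upwards [hcoord] with r hr using hasDerivAt_pi.2 hr

lemma absolutelyContinuousOnInterval_integralCurve [Fintype ι] (hγ : LocallyIntegrable γ)
    (s t : ℝ) : AbsolutelyContinuousOnInterval (integralCurve A γ x0) s t := by
  refine absolutelyContinuousOnInterval_pi fun i => ?_
  have hconst : AbsolutelyContinuousOnInterval (fun _ : ℝ => x0 i) (min 0 (min s t))
      (max 0 (max s t)) := contDiffOn_const.absolutelyContinuousOnInterval
  have hint : IntervalIntegrable (fun r => (A *ᵥ γ r) i) volume (min 0 (min s t))
      (max 0 (max s t)) :=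
    intervalIntegrable_iff.2 <| ((locallyIntegrable_mulVec_apply hγ A i).integrableOn_isCompact
      isCompact_uIcc).mono_set Set.uIoc_subset_uIcc
  have hac := hconst.fun_sub
    (hint.absolutelyContinuousOnInterval_intervalIntegral (c := 0) (by simp))
  exact hac.mono (Set.uIcc_subset_uIcc (by simp) (by simp))

end IntegralCurve

theorem contraction_estimate_general {ι : Type*} [Fintype ι] [Nonempty ι] [DecidableEq ι]
    {L : Matrix ι ι ℝ} (hrow : ∀ i, ∑ j, L i j = 0)
    {η : ℝ} (hη : 0 ≤ η) (hηL : ∀ i j, i ≠ j → η ≤ pairScrambling L i j)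
    {K : ℝ → Set ℝ} {ε : ℝ} (hε : 0 ≤ ε)
    (hsep : ∀ α β : ℝ, α ≠ β → ∀ v₁ ∈ K α, ∀ v₂ ∈ K β, ε ≤ (v₁ - v₂) / (α - β))
    {x0 : ι → ℝ} {x γ : ℝ → ι → ℝ} (hγint : LocallyIntegrable γ)
    (hγK : ∀ᵐ t, 0 ≤ t → ∀ j, γ t j ∈ K (x t j))
    (hsol : ∀ t, 0 ≤ t → ∀ i, x t i = x0 i - ∫ s in (0:ℝ)..t, ∑ j, L i j * γ s j)
    {s t : ℝ} (hs : 0 ≤ s) (hst : s ≤ t) :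
    spread (x t) ≤ Real.exp (-ε * η * (t - s)) * spread (x s) := by
  have hx (r : ℝ) (hr : 0 ≤ r) : x r = integralCurve L γ x0 r := funext (hsol r hr)
  rw [hx t (hs.trans hst), hx s hs]
  refine spread_le_exp_mul_spread hrow hη hηL hε hst
    (absolutelyContinuousOnInterval_integralCurve L x0 hγint s t)
    ((ae_hasDerivAt_integralCurve L x0 hγint).mono fun _ hr _ => hr) ?_
  filter_upwards [hγK] with r hr hmem i j hlt
  have hr0 : 0 ≤ r := hs.trans hmem.1
  rw [← hx r hr0] at hlt ⊢
  exact (le_div_iff₀ (sub_pos.2 hlt)).1 (hsep _ _ hlt.ne' _ (hr hr0 j) _ (hr hr0 i))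

/-- key contraction estimate in the proof of Theorem 2: under the
`ε`-separation condition on `g`, every Filippov solution of
`ẋ_i = -∑_j L i j g(x_j)` satisfies, for `0 ≤ s ≤ t`,
`max_i x t i - min_i x t i ≤ exp(-ε η(-L) (t-s)) (max_i x s i - min_i x s i)`. -/
theorem contraction_estimate
    (n : ℕ) (hn : 2 ≤ n) (L : Matrix (Fin n) (Fin n) ℝ)
    (hL1 : ∀ i j, i ≠ j → L i j ≤ 0) (hL2 : ∀ i, ∑ j, L i j = 0)
    (g : ℝ → ℝ) (hg : StrictMono g) (ε : ℝ) (hε : 0 < ε)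
    (hsep : ∀ α β : ℝ, α ≠ β →
      ∀ v₁ ∈ Set.Icc (leftLim g α) (rightLim g α),
      ∀ v₂ ∈ Set.Icc (leftLim g β) (rightLim g β),
        ε ≤ (v₁ - v₂) / (α - β))
    (x0 : Fin n → ℝ) (x γ : ℝ → Fin n → ℝ)
    (hxcont : Continuous x) (hγmeas : Measurable γ)
    (hγint : LocallyIntegrable γ volume)
    (hγK : ∀ᵐ t ∂volume, 0 ≤ t →
      ∀ j, γ t j ∈ Set.Icc (leftLim g (x t j)) (rightLim g (x t j)))
    (hsol : ∀ t, 0 ≤ t → ∀ i,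
      x t i = x0 i - ∫ s in (0:ℝ)..t, ∑ j, L i j * γ s j) :
    ∀ s t : ℝ, 0 ≤ s → s ≤ t →
      vecMax (by omega) (x t) - vecMin (by omega) (x t) ≤
        Real.exp (-ε * etaNeg L * (t - s)) *
          (vecMax (by omega) (x s) - vecMin (by omega) (x s)) := by
  have : Nonempty (Fin n) := ⟨⟨0, by omega⟩⟩
  exact fun s t hs hst => contraction_estimate_general hL2 (etaNeg_nonneg hL1)
    (fun _ _ => etaNeg_le_pairScrambling L) hε.le hsep hγint hγK hsol hs hst
end
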